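/- Let p be a prime, q = 1/p, let μ ≥ 1 be an integer, and set s = ⌊(μ−1)/2⌋. Then, as n → ∞, Q(n, p^μ) converges to the limit L = (q^μ − (Π_∞(q)/Π_∞(q²)) · ∑_{j=s+1}^{∞} (q^{μ+j} − q^{3j}) / Π_j(q²)) / (1−q), and this limit satisfies q^μ ≤ L ≤ q^μ/(1−q). -/

import Mathlib

/-- Number of symmetric `n × n` matrices over `ZMod m` with nonzero determinant. -/
noncomputable def Nsym (n m : ℕ) : ℕ :=
  Nat.card {A : Matrix (Fin n) (Fin n) (ZMod m) // A.IsSymm ∧ A.det ≠ 0}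

/-- Proportion of symmetric `n × n` matrices over `ZMod m` with nonzero determinant. -/
noncomputable def Psym (n m : ℕ) : ℝ :=
  (Nsym n m : ℝ) / (m : ℝ) ^ (n * (n + 1) / 2)

/-- `Q(n,m) = 1 - P(n,m)`. -/
noncomputable def Qsym (n m : ℕ) : ℝ := 1 - Psym n m

/-- `Π_n(t) = ∏_{j=1}^n (1 - t^j)`. -/
noncomputable def PiProd (n : ℕ) (t : ℝ) : ℝ :=
  ∏ j ∈ Finset.range n, (1 - t ^ (j + 1))

/-- `Π_∞(t) = ∏_{j=1}^∞ (1 - t^j)`. -/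
noncomputable def PiProdInf (t : ℝ) : ℝ :=
  ∏' j : ℕ, (1 - t ^ (j + 1))

open Matrix

section Bordered
variable {R : Type*} {ι κ : Type*}

/-- The matrix with corner entry `a`, first row and column `b`, and remaining block `D`. -/
def bordered (a : R) (b : ι → R) (D : Matrix ι ι R) : Matrix (Unit ⊕ ι) (Unit ⊕ ι) R :=
  fromBlocks (of fun _ _ => a) (replicateRow Unit b) (replicateCol Unit b) D

/-- A symmetric matrix on `Unit ⊕ ι` is a bordered symmetric matrix on `ι`. -/
def symmBorderedEquiv :
    R × (ι → R) × {D : Matrix ι ι R // D.IsSymm} ≃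
      {A : Matrix (Unit ⊕ ι) (Unit ⊕ ι) R // A.IsSymm} where
  toFun x := ⟨bordered x.1 x.2.1 x.2.2.1, by
    rw [bordered, isSymm_fromBlocks_iff]
    exact ⟨by ext; rfl, by ext; rfl, by ext; rfl, x.2.2.2⟩⟩
  invFun A := (A.1 (.inl ()) (.inl ()), fun j => A.1 (.inl ()) (.inr j),
    ⟨A.1.submatrix .inr .inr, A.2.submatrix _⟩)
  left_inv x := by rfl
  right_inv A := by
    ext i j
    rcases i with _ | i <;> rcases j with _ | j <;> simp [bordered]
    exact A.2.apply _ _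

/-- Reindexing symmetric matrices. -/
def symmReindex (e : ι ≃ κ) :
    {A : Matrix ι ι R // A.IsSymm} ≃ {A : Matrix κ κ R // A.IsSymm} where
  toFun A := ⟨A.1.submatrix e.symm e.symm, A.2.submatrix _⟩
  invFun A := ⟨A.1.submatrix e e, A.2.submatrix _⟩
  left_inv A := by ext; simp
  right_inv A := by ext; simp

variable [CommRing R]

/-- Translating symmetric matrices by a symmetric matrix. -/
def symmSub (C : Matrix ι ι R) (hC : C.IsSymm) :
    {A : Matrix ι ι R // A.IsSymm} ≃ {A : Matrix ι ι R // A.IsSymm} where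
  toFun A := ⟨A.1 - C, A.2.sub hC⟩
  invFun A := ⟨A.1 + C, A.2.add hC⟩
  left_inv A := by ext; simp
  right_inv A := by ext; simp

variable [Fintype ι] [DecidableEq ι] [Fintype κ] [DecidableEq κ]

lemma bordered_smul_left (a c : R) (b b' : ι → R) (D : Matrix ι ι R) :
    fromBlocks (of fun _ _ : Unit => c * a) (replicateRow Unit (c • b)) (replicateCol Unit b') D =
      fromBlocks (of fun _ _ : Unit => c) 0 0 (1 : Matrix ι ι R) *
        fromBlocks (of fun _ _ => a) (replicateRow Unit b) (replicateCol Unit b') D := by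
  rw [fromBlocks_multiply]
  congr 1 <;> ext <;> simp [mul_apply]

lemma bordered_smul_right (a c : R) (b b' : ι → R) (D : Matrix ι ι R) :
    fromBlocks (of fun _ _ : Unit => c * a) (replicateRow Unit b') (replicateCol Unit (c • b)) D =
      fromBlocks (of fun _ _ => a) (replicateRow Unit b') (replicateCol Unit b) D *
        fromBlocks (of fun _ _ : Unit => c) 0 0 (1 : Matrix ι ι R) := by
  rw [fromBlocks_multiply]
  congr 1 <;> ext <;> simp [mul_apply, mul_comm]

lemma det_bordered_smul_of_isUnit {a : R} (ha : IsUnit a) (c : R) (b : ι → R) :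
    ∃ C : Matrix ι ι R, C.IsSymm ∧ ∀ D : Matrix ι ι R,
      (bordered (c * a) (c • b) D).det = a * (c * (D - C).det) := by
  obtain ⟨u, rfl⟩ := ha
  refine ⟨(c * ((u⁻¹ : Rˣ) : R)) • vecMulVec b b, ?_, fun D => ?_⟩
  · ext i j; simp [vecMulVec_apply, mul_comm]
  have inv : Invertible (of fun _ _ : Unit => (u : R)) :=
    ⟨of fun _ _ => ((u⁻¹ : Rˣ) : R), by ext; simp [mul_apply], by ext; simp [mul_apply]⟩
  have hinv : ⅟(of fun _ _ : Unit => (u : R)) = of fun _ _ => ((u⁻¹ : Rˣ) : R) :=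
    invOf_eq_right_inv (by ext; simp [mul_apply])
  rw [bordered, bordered_smul_left, det_mul, det_fromBlocks_zero₁₂, det_fromBlocks₁₁, hinv]
  have : replicateCol Unit (c • b) * (of fun _ _ : Unit => ((u⁻¹ : Rˣ) : R)) *
      replicateRow Unit b = (c * ((u⁻¹ : Rˣ) : R)) • vecMulVec b b := by
    ext i j; simp [mul_apply, vecMulVec_apply]; ring
  rw [this]
  simp
  ring

lemma det_bordered_mul_sq (a c : R) (b : ι → R) (D : Matrix ι ι R) :
    (bordered (c * (c * a)) (c • b) D).det = c * (c * (bordered a b D).det) := by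
  rw [bordered, bordered_smul_left, bordered_smul_right, det_mul, det_mul, det_fromBlocks_zero₁₂]
  simp [bordered]
  ring

lemma det_bordered_bordered [IsLocalRing R] {a : R} (ha : ¬ IsUnit a) {b : Unit ⊕ κ → R}
    (hb : IsUnit (b (.inl ()))) (d : R) (c : κ → R) :
    ∃ (u : R) (C : Matrix κ κ R), IsUnit u ∧ C.IsSymm ∧ ∀ D : Matrix κ κ R,
      (bordered a b (bordered d c D)).det = u * (D - C).det := by
  set M : Matrix (Unit ⊕ Unit) (Unit ⊕ Unit) R := bordered a (fun _ => b (.inl ()))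
    (of fun _ _ => d) with hM
  set B : Matrix (Unit ⊕ Unit) κ R := of (Sum.elim (fun _ j => b (.inr j)) (fun _ => c)) with hB
  have hMs : M.IsSymm := (symmBorderedEquiv (a, _, ⟨_, by ext; rfl⟩)).2
  have hdet : M.det = a * d - b (.inl ()) * b (.inl ()) := by
    rw [← det_submatrix_equiv_self (finSumFinEquiv.symm.trans
      (Equiv.sumCongr (Equiv.ofUnique (Fin 1) Unit) (Equiv.ofUnique (Fin 1) Unit))), det_fin_two]
    rfl
  have hu : IsUnit M.det := by
    rw [hdet]
    by_contra h
    refine (?_ : ¬ IsUnit (b (.inl ()) * b (.inl ()))) (hb.mul hb)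
    have := IsLocalRing.nonunits_add (a := a * d) (b := -(a * d - b (.inl ()) * b (.inl ())))
      (fun h' => ha (isUnit_of_mul_isUnit_left h')) (fun h' => h ((IsUnit.neg_iff _).1 h'))
    simpa using this
  have inv := M.invertibleOfIsUnitDet hu
  refine ⟨M.det, Bᵀ * M⁻¹ * B, hu, ?_, fun D => ?_⟩
  · rw [IsSymm, transpose_mul, transpose_mul, transpose_transpose, transpose_nonsing_inv, hMs.eq,
      Matrix.mul_assoc]
  rw [← invOf_eq_nonsing_inv, ← det_fromBlocks₁₁,
    ← det_submatrix_equiv_self (Equiv.sumAssoc Unit Unit κ)]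
  congr 1
  ext ((i | i) | i) ((j | j) | j) <;> rfl

end Bordered

section Counting
variable {R : Type*} [Fintype R] {ι κ : Type*} [Fintype ι] [DecidableEq ι] [Fintype κ]
  [DecidableEq κ]

open scoped Classical in
lemma sum_symm_reindex (e : ι ≃ κ) (F : Matrix κ κ R → ℝ) :
    ∑ A : {A : Matrix ι ι R // A.IsSymm}, F (A.1.submatrix e.symm e.symm) =
      ∑ A : {A : Matrix κ κ R // A.IsSymm}, F A.1 :=
  Fintype.sum_equiv (symmReindex e) _ _ fun _ => rfl

open scoped Classical in
lemma sum_symm_bordered (F : Matrix (Unit ⊕ ι) (Unit ⊕ ι) R → ℝ) :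
    ∑ A : {A : Matrix (Unit ⊕ ι) (Unit ⊕ ι) R // A.IsSymm}, F A.1 =
      ∑ a : R, ∑ b : ι → R, ∑ D : {D : Matrix ι ι R // D.IsSymm}, F (bordered a b D.1) := by
  rw [← Fintype.sum_equiv symmBorderedEquiv (fun x => F (bordered x.1 x.2.1 x.2.2.1)) _
    fun _ => rfl, Fintype.sum_prod_type]
  exact Finset.sum_congr rfl fun a _ => Fintype.sum_prod_type _

variable [CommRing R]

open scoped Classical in
/-- Sum of `F (det A)` over the symmetric `n × n` matrices `A` over `R`. -/
noncomputable def symmDetSum (n : ℕ) (F : R → ℝ) : ℝ :=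
  ∑ A : {A : Matrix (Fin n) (Fin n) R // A.IsSymm}, F A.1.det

open scoped Classical in
lemma sum_symm_det (F : R → ℝ) :
    ∑ A : {A : Matrix ι ι R // A.IsSymm}, F A.1.det = symmDetSum (Fintype.card ι) F := by
  rw [symmDetSum, ← sum_symm_reindex (Fintype.equivFin ι) fun A => F A.det]
  simp

open scoped Classical in
lemma symmDetSum_succ (n : ℕ) (F : R → ℝ) :
    symmDetSum (n + 1) F = ∑ a : R, ∑ b : Fin n → R,
      ∑ D : {D : Matrix (Fin n) (Fin n) R // D.IsSymm}, F (bordered a b D.1).det := by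
  rw [← sum_symm_bordered fun A => F A.det, sum_symm_det]
  simp [add_comm]

open scoped Classical in
lemma sum_symm_shift {F : R → ℝ} {u : R} (hF : ∀ d, F (u * d) = F d)
    {C : Matrix ι ι R} (hC : C.IsSymm) {g : Matrix ι ι R → R}
    (hg : ∀ D, g D = u * (D - C).det) :
    ∑ D : {D : Matrix ι ι R // D.IsSymm}, F (g D.1) = symmDetSum (Fintype.card ι) F := by
  rw [← sum_symm_det]
  exact Fintype.sum_equiv (symmSub C hC) _ _ fun D => by rw [hg, hF]; rfl

open scoped Classical in
lemma sum_bordered_of_isUnit {F : R → ℝ} (hF : ∀ u d, IsUnit u → F (u * d) = F d) (c : R)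
    {a : R} (ha : IsUnit a) (b : ι → R) :
    ∑ D : {D : Matrix ι ι R // D.IsSymm}, F (bordered (c * a) (c • b) D.1).det =
      symmDetSum (Fintype.card ι) fun d => F (c * d) := by
  obtain ⟨C, hC, h⟩ := det_bordered_smul_of_isUnit ha c b
  rw [← sum_symm_shift (F := fun d => F (c * d)) (u := a) _ hC fun D => rfl]
  · simp only [h]
    exact Finset.sum_congr rfl fun D _ => by rw [mul_left_comm]
  · intro d
    rw [mul_left_comm, hF _ _ ha]

open scoped Classical in
lemma sum_bordered_of_not_isUnit [IsLocalRing R] {F : R → ℝ}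
    (hF : ∀ u d, IsUnit u → F (u * d) = F d) {n : ℕ} {a : R} (ha : ¬ IsUnit a)
    {b : Fin (n + 1) → R} {i : Fin (n + 1)} (hb : IsUnit (b i)) :
    ∑ D : {D : Matrix (Fin (n + 1)) (Fin (n + 1)) R // D.IsSymm}, F (bordered a b D.1).det =
      (Fintype.card R : ℝ) ^ (n + 1) * symmDetSum n F := by
  let e : Unit ⊕ Fin n ≃ Fin (n + 1) :=
    ((finSuccEquiv' i).trans ((Equiv.optionEquivSumPUnit _).trans (Equiv.sumComm _ _))).symm
  have he : e (.inl ()) = i := by simp [e]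
  have hdet (D : Matrix (Unit ⊕ Fin n) (Unit ⊕ Fin n) R) :
      (bordered a b (D.submatrix e.symm e.symm)).det = (bordered a (b ∘ e) D).det := by
    rw [← det_submatrix_equiv_self (Equiv.sumCongr (Equiv.refl Unit) e)]
    congr 1
    ext (i | i) (j | j) <;> simp [bordered]
  rw [← sum_symm_reindex e fun D => F (bordered a b D).det]
  simp only [hdet]
  rw [sum_symm_bordered fun D => F (bordered a (b ∘ e) D).det]
  have key (d : R) (c : Fin n → R) : ∑ D : {D : Matrix (Fin n) (Fin n) R // D.IsSymm},
      F (bordered a (b ∘ e) (bordered d c D.1)).det = symmDetSum n F := by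
    obtain ⟨u, C, hu, hC, h⟩ :=
      det_bordered_bordered ha (b := b ∘ e) (by simpa [he] using hb) d c
    rw [sum_symm_shift (fun d => hF u d hu) hC h, Fintype.card_fin]
  simp [key, pow_succ']
  ring

open scoped Classical in
lemma sum_comp_smul {π : R} {p : ℕ}
    (hπ : ∀ y : R, Fintype.card {x // π * x = y} = if IsUnit y then 0 else p) (g : (ι → R) → ℝ) :
    ∑ b : ι → R, g (π • b) =
      p ^ Fintype.card ι * ∑ b : ι → R, if ∀ i, ¬ IsUnit (b i) then g b else 0 := by
  rw [← Finset.sum_fiberwise' Finset.univ (fun b : ι → R => π • b) g, Finset.mul_sum]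
  refine Finset.sum_congr rfl fun c _ => ?_
  rw [Finset.sum_const, nsmul_eq_mul]
  have hcard : (Finset.univ.filter fun b : ι → R => π • b = c).card =
      ∏ i, if IsUnit (c i) then 0 else p := by
    simp only [← hπ]
    rw [← Fintype.card_pi, ← Fintype.card_subtype]
    exact Fintype.card_congr ((Equiv.subtypeEquivRight fun b => by simp [funext_iff]).trans
      (Equiv.subtypePiEquivPi (p := fun i x => π * x = c i)))
  rw [hcard]
  split_ifs with h
  · simp [h]
  · push Not at h
    obtain ⟨i, hi⟩ := h
    rw [Finset.prod_eq_zero (Finset.mem_univ i) (by simp [hi])]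
    simp

open scoped Classical in
lemma sum_comp_mul {π : R} {p : ℕ}
    (hπ : ∀ y : R, Fintype.card {x // π * x = y} = if IsUnit y then 0 else p) (g : R → ℝ) :
    ∑ a : R, g (π * a) = p * ∑ a : R, if ¬ IsUnit a then g a else 0 := by
  have := sum_comp_smul (ι := Unit) hπ (fun b => g (b ()))
  rw [Fintype.card_unit, pow_one] at this
  convert this using 1
  · exact (Fintype.sum_equiv (Equiv.funUnique Unit R) _ _ fun _ => rfl).symm
  · congr 1
    exact (Fintype.sum_equiv (Equiv.funUnique Unit R) _ _ fun b => by
      simp [Equiv.funUnique, Unique.forall_iff]).symm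

open scoped Classical in
lemma symmDetSum_recurrence [IsLocalRing R] {π : R} {p : ℕ} (hp : 0 < p)
    (hπ : ∀ y : R, Fintype.card {x // π * x = y} = if IsUnit y then 0 else p)
    {F : R → ℝ} (hF : ∀ u d, IsUnit u → F (u * d) = F d) {q r : ℝ} (hq : q = 1 / p)
    (hr : r = Fintype.card R) (n : ℕ) :
    symmDetSum (n + 1) F = (1 - q) * r ^ (n + 1) * symmDetSum n F +
      q * (1 - q ^ n) * r ^ (2 * n + 1) * symmDetSum (n - 1) F +
      q ^ (n + 1) * ((1 - q) * r ^ (n + 1) * symmDetSum n (fun d => F (π * d)) +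
        q * symmDetSum (n + 1) fun d => F (π * (π * d))) := by
  have hp' : (p : ℝ) ≠ 0 := by positivity
  have hmul (g : R → ℝ) : (∑ a : R, if ¬ IsUnit a then g a else 0) = q * ∑ a : R, g (π * a) := by
    rw [sum_comp_mul hπ, hq]; field_simp
  have hsmul (g : (Fin n → R) → ℝ) : (∑ b, if ∀ i, ¬ IsUnit (b i) then g b else 0) =
      q ^ n * ∑ b : Fin n → R, g (π • b) := by
    rw [sum_comp_smul hπ, hq, Fintype.card_fin, ← mul_assoc, ← mul_pow, one_div_mul_cancel hp',
      one_pow, one_mul]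
    congr!
  have hsplit (g : R → ℝ) : ∑ a, g a = (∑ a, if IsUnit a then g a else 0) +
      ∑ a, if ¬ IsUnit a then g a else 0 := by
    rw [← Finset.sum_add_distrib]
    exact Finset.sum_congr rfl fun a _ => by split_ifs <;> simp
  have hunit (g : R → ℝ) (x : ℝ) (hg : ∀ a, IsUnit a → g a = x) :
      (∑ a : R, if IsUnit a then g a else 0) = (1 - q) * r * x := by
    have h1 := hsplit fun _ => x
    rw [hmul, Finset.sum_congr rfl fun a _ =>
      (ite_congr rfl (fun ha => (hg a ha).symm) fun _ => rfl)] at h1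
    simp only [Finset.sum_const, Finset.card_univ, nsmul_eq_mul, ← hr] at h1
    linarith
  set T : R → (Fin n → R) → ℝ := fun a b =>
    ∑ D : {D : Matrix (Fin n) (Fin n) R // D.IsSymm}, F (bordered a b D.1).det with hT
  have hT1 (a : R) (ha : IsUnit a) (b) : T a b = symmDetSum n F := by
    simpa using sum_bordered_of_isUnit hF 1 ha b
  have hTπ (a : R) (ha : IsUnit a) (b) :
      T (π * a) (π • b) = symmDetSum n fun d => F (π * d) := by
    simpa using sum_bordered_of_isUnit hF π ha b
  have hTππ : ∑ a, ∑ b, T (π * (π * a)) (π • b) =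
      symmDetSum (n + 1) fun d => F (π * (π * d)) := by
    rw [symmDetSum_succ]
    simp only [hT, det_bordered_mul_sq]
  have hTmix (a : R) (ha : ¬ IsUnit a) : ∑ b, T a b =
      (1 - q ^ n) * r ^ (2 * n) * symmDetSum (n - 1) F + q ^ n * ∑ b, T a (π • b) := by
    have h2 (b : Fin n → R) : T a b = (r ^ n * symmDetSum (n - 1) F -
        if ∀ i, ¬ IsUnit (b i) then r ^ n * symmDetSum (n - 1) F else 0) +
        if ∀ i, ¬ IsUnit (b i) then T a b else 0 := by
      split_ifs with h
      · simp
      · push Not at h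
        obtain ⟨i, hi⟩ := h
        cases n with
        | zero => exact i.elim0
        | succ n => simpa [hr] using sum_bordered_of_not_isUnit hF ha hi
    rw [Finset.sum_congr rfl fun b _ => h2 b, Finset.sum_add_distrib, Finset.sum_sub_distrib,
      hsmul, hsmul]
    simp [← hr]
    ring
  have h3 : ∑ a, ∑ b, T (π * a) (π • b) = (1 - q) * r ^ (n + 1) *
      symmDetSum n (fun d => F (π * d)) + q * symmDetSum (n + 1) fun d => F (π * (π * d)) := by
    rw [hsplit, hmul, hTππ, hunit _ _ fun a ha => Finset.sum_congr rfl fun b _ => hTπ a ha b]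
    simp [← hr]
    ring
  have h4 : (∑ a, if ¬ IsUnit a then ∑ b, T a b else 0) =
      q * (1 - q ^ n) * r ^ (2 * n + 1) * symmDetSum (n - 1) F +
        q ^ (n + 1) * ∑ a, ∑ b, T (π * a) (π • b) := by
    rw [Finset.sum_congr rfl fun a _ => ite_congr rfl (hTmix a) fun _ => rfl, hmul,
      Finset.sum_add_distrib, ← Finset.mul_sum _ _ (q ^ n)]
    simp [← hr]
    ring
  rw [symmDetSum_succ, hsplit, h4, h3,
    hunit _ _ fun a ha => Finset.sum_congr rfl fun b _ => hT1 a ha b]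
  simp [← hr]
  ring

end Counting

lemma ZMod.natCast_dvd_natCast_iff {m k : ℕ} (hk : k ∣ m) (x : ℕ) :
    (k : ZMod m) ∣ (x : ZMod m) ↔ k ∣ x := by
  refine ⟨fun ⟨c, hc⟩ => ?_, fun h => by exact_mod_cast Nat.cast_dvd_cast h⟩
  have h := congrArg (ZMod.castHom hk (ZMod k)) hc
  rw [map_mul, map_natCast, map_natCast, ZMod.natCast_self, zero_mul] at h
  exact (ZMod.natCast_eq_zero_iff _ _).1 h

section PrimePower
variable {p N : ℕ}

lemma ZMod.prime_isUnit_iff_not_dvd (hp : p.Prime) (hN : N ≠ 0) (x : ZMod (p ^ N)) :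
    IsUnit x ↔ ¬ (p : ZMod (p ^ N)) ∣ x := by
  have : NeZero (p ^ N) := ⟨pow_ne_zero _ hp.ne_zero⟩
  obtain ⟨x, rfl⟩ := ZMod.natCast_zmod_surjective x
  rw [ZMod.natCast_dvd_natCast_iff (dvd_pow_self p hN), ZMod.isUnit_iff_coprime,
    Nat.coprime_pow_right_iff (Nat.pos_of_ne_zero hN), Nat.coprime_comm, hp.coprime_iff_not_dvd]

lemma ZMod.isLocalRing_prime_pow (hp : p.Prime) (hN : N ≠ 0) : IsLocalRing (ZMod (p ^ N)) := by
  have : Fact (1 < p ^ N) := ⟨Nat.one_lt_pow hN hp.one_lt⟩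
  refine IsLocalRing.of_nonunits_add fun a b ha hb => ?_
  rw [mem_nonunits_iff, ZMod.prime_isUnit_iff_not_dvd hp hN, not_not] at *
  exact dvd_add ha hb

lemma ZMod.pow_dvd_prime_mul_iff (hp : p.Prime) {k : ℕ} (hk : k ≤ N) (x : ZMod (p ^ N)) :
    (p : ZMod (p ^ N)) ^ k ∣ p * x ↔ (p : ZMod (p ^ N)) ^ (k - 1) ∣ x := by
  have : NeZero (p ^ N) := ⟨pow_ne_zero _ hp.ne_zero⟩
  obtain ⟨x, rfl⟩ := ZMod.natCast_zmod_surjective x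
  rw [← Nat.cast_mul, ← Nat.cast_pow, ← Nat.cast_pow,
    ZMod.natCast_dvd_natCast_iff (pow_dvd_pow _ hk),
    ZMod.natCast_dvd_natCast_iff (pow_dvd_pow _ (by omega))]
  cases k with
  | zero => simp
  | succ k => rw [pow_succ', Nat.mul_dvd_mul_iff_left hp.pos]; simp

open scoped Classical in
lemma ZMod.card_mul_prime_eq (hp : p.Prime) (hN : N ≠ 0) [NeZero (p ^ N)] (y : ZMod (p ^ N)) :
    Fintype.card {x : ZMod (p ^ N) // p * x = y} = if IsUnit y then 0 else p := by
  have hiff := ZMod.prime_isUnit_iff_not_dvd hp hN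
  split_ifs with hy
  · rw [Fintype.card_eq_zero_iff]
    exact ⟨fun x => (hiff y).1 hy ⟨x, x.2.symm⟩⟩
  have hker (y : ZMod (p ^ N)) (hy : ¬ IsUnit y) : Fintype.card {x : ZMod (p ^ N) // p * x = y} =
      Fintype.card {x : ZMod (p ^ N) // p * x = 0} := by
    rw [hiff, not_not] at hy
    obtain ⟨z, rfl⟩ := hy
    exact Fintype.card_congr ((Equiv.subRight z).subtypeEquiv fun x => by
      simp [mul_sub, sub_eq_zero])
  have htot : p ^ N = Fintype.card {y : ZMod (p ^ N) // ¬ IsUnit y} *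
      Fintype.card {x : ZMod (p ^ N) // p * x = 0} := by
    have e : ZMod (p ^ N) ≃ Σ y : {y : ZMod (p ^ N) // ¬ IsUnit y},
        {x : ZMod (p ^ N) // p * x = y.1} :=
      (Equiv.sigmaFiberEquiv fun x : ZMod (p ^ N) =>
        (⟨p * x, by rw [hiff, not_not]; exact dvd_mul_right _ _⟩ : {y // ¬ IsUnit y})).symm.trans
      (Equiv.sigmaCongrRight fun y => Equiv.subtypeEquivRight fun x => by simp [Subtype.ext_iff])
    have h := Fintype.card_congr e
    rw [Fintype.card_sigma, ZMod.card] at h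
    rw [Finset.sum_congr rfl fun y _ => hker y.1 y.2] at h
    simpa using h
  have hunits : Fintype.card {y : ZMod (p ^ N) // ¬ IsUnit y} = p ^ (N - 1) := by
    have h1 : Fintype.card {y : ZMod (p ^ N) // IsUnit y} = p ^ (N - 1) * (p - 1) := by
      rw [← Nat.totient_prime_pow hp (Nat.pos_of_ne_zero hN), ← ZMod.card_units_eq_totient]
      exact Fintype.card_congr Submonoid.unitsTypeEquivIsUnitSubmonoid.symm.toEquiv
    rw [Fintype.card_subtype_compl, h1, ZMod.card]
    obtain ⟨M, rfl⟩ := Nat.exists_eq_succ_of_ne_zero hN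
    rw [Nat.succ_sub_one, pow_succ, ← Nat.mul_sub, Nat.sub_sub_self hp.one_lt.le, mul_one]
  rw [hker y hy]
  rw [hunits] at htot
  refine Nat.eq_of_mul_eq_mul_left (pow_pos hp.pos (N - 1)) (htot.symm.trans ?_)
  rw [← pow_succ, Nat.sub_add_cancel (Nat.pos_of_ne_zero hN)]

end PrimePower

section Recurrence

lemma eq_zero_of_shift_two {N : ℕ} {c : ℝ} {y : ℕ → ℝ} (h0 : y 0 = 0)
    (h : ∀ k, k ≠ 0 → k ≤ N → y k = c * y (k - 2)) : ∀ k ≤ N, y k = 0 := by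
  intro k
  induction k using Nat.strong_induction_on with
  | _ k ih =>
    intro hk
    rcases eq_or_ne k 0 with rfl | hk0
    · exact h0
    · rw [h k hk0 hk, ih (k - 2) (by omega) (by omega), mul_zero]

/-- The three-term recurrence satisfied by the proportions `P n k` of symmetric `n × n` matrices
whose determinant is not divisible by the `k`-th power of the uniformizer. -/
structure DetRecurrence (q : ℝ) (N : ℕ) (P : ℕ → ℕ → ℝ) : Prop where
  zero_right : ∀ n, P n 0 = 0
  zero_left : ∀ k, k ≠ 0 → k ≤ N → P 0 k = 1
  step : ∀ n k, k ≤ N → P (n + 1) k = (1 - q) * P n k + q * (1 - q ^ n) * P (n - 1) k +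
    q ^ (n + 1) * ((1 - q) * P n (k - 1) + q * P (n + 1) (k - 2))

namespace DetRecurrence
variable {q : ℝ} {N : ℕ} {P : ℕ → ℕ → ℝ}

lemma odd_of_even (hP : DetRecurrence q N P) (n : ℕ)
    (heven : n ≠ 0 → ∀ k ≤ N, P n k =
      q ^ (n + 1) * P n (k - 2) + P (n - 1) k - q ^ (n + 1) * P (n - 1) (k - 1)) :
    ∀ k ≤ N, P (n + 1) k = q ^ (n + 1) * P (n + 1) (k - 1) + (1 - q ^ (n + 1)) * P n k := by
  intro k hk
  refine sub_eq_zero.1 (eq_zero_of_shift_two (N := N) (c := q ^ (n + 2)) (y := fun k =>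
    P (n + 1) k - (q ^ (n + 1) * P (n + 1) (k - 1) + (1 - q ^ (n + 1)) * P n k)) ?_ ?_ k hk)
  · simp [hP.zero_right]
  intro k hk0 hk
  have e1 : k - 1 - 1 = k - 2 := by omega
  have e2 : k - 1 - 2 = k - 2 - 1 := by omega
  have h1 := hP.step n k hk
  have h2 := hP.step n (k - 1) (by omega)
  rw [e1, e2] at h2
  rcases eq_or_ne n 0 with rfl | hn
  · linear_combination h1 - q * h2
  · have h3 := heven hn k hk
    linear_combination h1 - q ^ (n + 1) * h2 - q * (1 - q ^ n) * h3

lemma even_of_odd (hP : DetRecurrence q N P) (n : ℕ)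
    (hodd : ∀ k ≤ N, P (n + 1) k =
      q ^ (n + 1) * P (n + 1) (k - 1) + (1 - q ^ (n + 1)) * P n k) :
    ∀ k ≤ N, P (n + 2) k = q ^ (n + 3) * P (n + 2) (k - 2) + P (n + 1) k -
      q ^ (n + 3) * P (n + 1) (k - 1) := by
  intro k hk
  have h1 := hP.step (n + 1) k hk
  have h2 := hodd k hk
  simp only [Nat.add_sub_cancel] at h1
  linear_combination h1 - q * h2

lemma odd_even (hP : DetRecurrence q N P) (m : ℕ) :
    (∀ k ≤ N, P (2 * m + 1) k =
      q ^ (2 * m + 1) * P (2 * m + 1) (k - 1) + (1 - q ^ (2 * m + 1)) * P (2 * m) k) ∧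
    ∀ k ≤ N, P (2 * m + 2) k = q ^ (2 * m + 3) * P (2 * m + 2) (k - 2) + P (2 * m + 1) k -
      q ^ (2 * m + 3) * P (2 * m + 1) (k - 1) := by
  induction m with
  | zero =>
    have h := hP.odd_of_even 0 (fun h => absurd rfl h)
    exact ⟨h, hP.even_of_odd 0 h⟩
  | succ m ih =>
    have h := hP.odd_of_even (2 * m + 2) (fun _ => ih.2)
    exact ⟨h, hP.even_of_odd (2 * m + 2) h⟩

lemma odd_step (hP : DetRecurrence q N P) (m : ℕ) : ∀ k ≤ N, P (2 * m + 3) k =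
    q ^ (2 * m + 3) * P (2 * m + 3) (k - 2) + (1 - q ^ (2 * m + 3)) * P (2 * m + 1) k := by
  have hodd : ∀ k ≤ N, P (2 * m + 3) k =
    q ^ (2 * m + 3) * P (2 * m + 3) (k - 1) + (1 - q ^ (2 * m + 3)) * P (2 * m + 2) k :=
    (hP.odd_even (m + 1)).1
  have heven := (hP.odd_even m).2
  intro k
  induction k with
  | zero => simp [hP.zero_right]
  | succ k ih =>
    intro hk
    have h1 := ih (by omega)
    have h2 := hodd (k + 1) hk
    have h3 := hodd (k + 1 - 2) (by omega)
    have h4 := heven (k + 1) hk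
    rw [show k + 1 - 2 - 1 = k - 2 by omega] at h3
    simp only [Nat.add_sub_cancel] at h2 h4
    linear_combination h2 + q ^ (2 * m + 3) * h1 - q ^ (2 * m + 3) * h3 +
      (1 - q ^ (2 * m + 3)) * h4

end DetRecurrence

/-- The coefficients of `∏_{i=1}^m (1 - q^{2i+1} Y)⁻¹` as a power series in `Y`. -/
noncomputable def qBinomCoeff (q : ℝ) (m j : ℕ) : ℝ :=
  q ^ (3 * j) * (∏ i ∈ Finset.range j, (1 - q ^ (2 * (m + i)))) / PiProd j (q ^ 2)

lemma one_sub_pow_pos {t : ℝ} (h0 : 0 ≤ t) (h1 : t < 1) (j : ℕ) : 0 < 1 - t ^ (j + 1) :=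
  sub_pos.2 (pow_lt_one₀ h0 h1 j.succ_ne_zero)

lemma PiProd_pos {t : ℝ} (h0 : 0 ≤ t) (h1 : t < 1) (n : ℕ) : 0 < PiProd n t :=
  Finset.prod_pos fun j _ => one_sub_pow_pos h0 h1 j

lemma qBinomCoeff_succ_succ {q : ℝ} (h0 : 0 ≤ q) (h1 : q < 1) (m j : ℕ) :
    qBinomCoeff q (m + 1) (j + 1) =
      q ^ (2 * m + 3) * qBinomCoeff q (m + 1) j + qBinomCoeff q m (j + 1) := by
  have hP := (PiProd_pos (sq_nonneg q) (pow_lt_one₀ h0 h1 two_ne_zero) j).ne'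
  have hj := (one_sub_pow_pos (sq_nonneg q) (pow_lt_one₀ h0 h1 two_ne_zero) j).ne'
  have hsucc : PiProd (j + 1) (q ^ 2) = PiProd j (q ^ 2) * (1 - (q ^ 2) ^ (j + 1)) :=
    Finset.prod_range_succ _ _
  have h2 : ∏ i ∈ Finset.range (j + 1), (1 - q ^ (2 * (m + i))) =
      (∏ i ∈ Finset.range j, (1 - q ^ (2 * (m + 1 + i)))) * (1 - q ^ (2 * m)) := by
    rw [Finset.prod_range_succ']
    simp [add_assoc, add_comm 1]
  rw [qBinomCoeff, qBinomCoeff, qBinomCoeff, h2, Finset.prod_range_succ, hsucc]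
  field_simp
  ring

/-- Closed form of the proportions in odd size. -/
noncomputable def oddDetProportion (q : ℝ) (K m k : ℕ) : ℝ :=
  (∏ i ∈ Finset.range (m + 1), (1 - q ^ (2 * i + 1))) *
    ∑ j ∈ Finset.range K, qBinomCoeff q m j * ((1 - q ^ (k - 2 * j)) / (1 - q))

lemma oddDetProportion_succ {q : ℝ} (h0 : 0 ≤ q) (h1 : q < 1) {K k : ℕ} (hK : K ≠ 0)
    (hk : k ≤ 2 * K) (m : ℕ) :
    oddDetProportion q K (m + 1) k = q ^ (2 * m + 3) * oddDetProportion q K (m + 1) (k - 2) +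
      (1 - q ^ (2 * m + 3)) * oddDetProportion q K m k := by
  obtain ⟨K, rfl⟩ := Nat.exists_eq_succ_of_ne_zero hK
  have e1 (j : ℕ) : k - 2 - 2 * j = k - 2 * (j + 1) := by omega
  have hz (m : ℕ) : qBinomCoeff q m 0 = 1 := by simp [qBinomCoeff, PiProd]
  set g : ℕ → ℝ := fun j => (1 - q ^ (k - 2 * j)) / (1 - q) with hg
  have hgK : g (K + 1) = 0 := by simp [hg, show k - 2 * (K + 1) = 0 by omega]
  have hsum (m : ℕ) : ∑ j ∈ Finset.range (K + 1), qBinomCoeff q m j * g j =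
      ∑ j ∈ Finset.range K, qBinomCoeff q m (j + 1) * g (j + 1) + g 0 := by
    rw [Finset.sum_range_succ', hz, one_mul]
  have hshift : ∑ j ∈ Finset.range (K + 1), qBinomCoeff q (m + 1) j * g (j + 1) =
      ∑ j ∈ Finset.range K, qBinomCoeff q (m + 1) j * g (j + 1) := by
    rw [Finset.sum_range_succ, hgK, mul_zero, add_zero]
  have hrec : ∑ j ∈ Finset.range K, qBinomCoeff q (m + 1) (j + 1) * g (j + 1) =
      q ^ (2 * m + 3) * ∑ j ∈ Finset.range K, qBinomCoeff q (m + 1) j * g (j + 1) +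
        ∑ j ∈ Finset.range K, qBinomCoeff q m (j + 1) * g (j + 1) := by
    rw [Finset.mul_sum, ← Finset.sum_add_distrib]
    refine Finset.sum_congr rfl fun j _ => ?_
    rw [qBinomCoeff_succ_succ h0 h1]
    ring
  simp only [oddDetProportion, e1, Nat.succ_eq_add_one]
  rw [Finset.prod_range_succ _ (m + 1), hsum, hsum, hshift, hrec]
  ring

lemma qBinomCoeff_zero_left (q : ℝ) (j : ℕ) : qBinomCoeff q 0 (j + 1) = 0 := by
  rw [qBinomCoeff, Finset.prod_range_succ']
  simp

namespace DetRecurrence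
variable {q : ℝ} {N : ℕ} {P : ℕ → ℕ → ℝ}

lemma eq_oddDetProportion (hP : DetRecurrence q N P) (h0 : 0 ≤ q) (h1 : q < 1) {K : ℕ}
    (hK : K ≠ 0) (hN : N ≤ 2 * K) (m : ℕ) :
    ∀ k ≤ N, P (2 * m + 1) k = oddDetProportion q K m k := by
  have hq : 1 - q ≠ 0 := (sub_pos.2 h1).ne'
  induction m with
  | zero =>
    have hval (k : ℕ) : oddDetProportion q K 0 k = 1 - q ^ k := by
      obtain ⟨K, rfl⟩ := Nat.exists_eq_succ_of_ne_zero hK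
      rw [oddDetProportion, Finset.sum_range_succ']
      simp [qBinomCoeff_zero_left]
      simp [qBinomCoeff, PiProd, mul_div_cancel₀ _ hq]
    intro k
    rw [hval]
    induction k with
    | zero => simp [hP.zero_right]
    | succ k ih =>
      intro hk
      rw [(hP.odd_even 0).1 _ hk, Nat.add_sub_cancel, ih (by omega),
        hP.zero_left _ k.succ_ne_zero hk]
      ring
  | succ m ih =>
    intro k hk
    refine sub_eq_zero.1 (eq_zero_of_shift_two (N := N) (c := q ^ (2 * m + 3)) (y := fun k =>
      P (2 * (m + 1) + 1) k - oddDetProportion q K (m + 1) k) ?_ ?_ k hk)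
    · simp [hP.zero_right, oddDetProportion]
    · intro k _ hk
      rw [show 2 * (m + 1) + 1 = 2 * m + 3 by ring, hP.odd_step m k hk,
        oddDetProportion_succ h0 h1 hK (by omega), ih k hk]
      ring

end DetRecurrence
end Recurrence

section Limits
open Filter Topology

/-- Euler's series `∑ yʲ / Π_j(u)`. -/
noncomputable def eulerSeries (u y : ℝ) : ℝ := ∑' j : ℕ, y ^ j / PiProd j u

lemma PiProd_succ (j : ℕ) (u : ℝ) : PiProd (j + 1) u = PiProd j u * (1 - u ^ (j + 1)) :=
  Finset.prod_range_succ _ _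

variable {u y : ℝ}

lemma summable_eulerSeries (hu0 : 0 ≤ u) (hu1 : u < 1) (hy0 : 0 < y) (hy1 : y < 1) :
    Summable fun j : ℕ => y ^ j / PiProd j u := by
  have hpos (j : ℕ) := PiProd_pos hu0 hu1 j
  refine summable_of_ratio_test_tendsto_lt_one hy1
    (Eventually.of_forall fun j => (div_pos (pow_pos hy0 j) (hpos j)).ne') ?_
  have h : Tendsto (fun j : ℕ => y / (1 - u ^ (j + 1))) atTop (𝓝 (y / (1 - 0))) :=
    tendsto_const_nhds.div (tendsto_const_nhds.sub
      ((tendsto_add_atTop_iff_nat 1).2 (tendsto_pow_atTop_nhds_zero_of_lt_one hu0 hu1))) (by simp)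
  rw [sub_zero, div_one] at h
  refine h.congr fun j => ?_
  have h1 := hpos j
  have h2 := one_sub_pow_pos hu0 hu1 j
  rw [Real.norm_of_nonneg (by have := hpos (j + 1); positivity),
    Real.norm_of_nonneg (by positivity), PiProd_succ, pow_succ y]
  field_simp

lemma eulerSeries_mul (hu0 : 0 < u) (hu1 : u < 1) (hy0 : 0 < y) (hy1 : y < 1) :
    (1 - y) * eulerSeries u y = eulerSeries u (u * y) := by
  have hs := summable_eulerSeries hu0.le hu1 hy0 hy1
  have huy : u * y < 1 := mul_lt_one_of_nonneg_of_lt_one_left hu0.le hu1 hy1.le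
  have hs' := summable_eulerSeries hu0.le hu1 (mul_pos hu0 hy0) huy
  have h : eulerSeries u y - eulerSeries u (u * y) = y * eulerSeries u y := by
    rw [eulerSeries, eulerSeries, ← hs.tsum_sub hs', (hs.sub hs').tsum_eq_zero_add, ← tsum_mul_left]
    simp only [pow_zero, sub_self, zero_add]
    refine tsum_congr fun j => ?_
    have h1 := (PiProd_pos hu0.le hu1 j).ne'
    have h2 := (one_sub_pow_pos hu0.le hu1 j).ne'
    rw [PiProd_succ, mul_pow, pow_succ y]
    field_simp
  linarith

lemma prod_mul_eulerSeries (hu0 : 0 < u) (hu1 : u < 1) (hy0 : 0 < y) (hy1 : y < 1) (m : ℕ) :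
    (∏ i ∈ Finset.range m, (1 - u ^ i * y)) * eulerSeries u y = eulerSeries u (u ^ m * y) := by
  induction m with
  | zero => simp
  | succ m ih =>
    have hum : u ^ m * y < 1 := mul_lt_one_of_nonneg_of_lt_one_right
      (pow_le_one₀ hu0.le hu1.le) hy0.le hy1
    rw [Finset.prod_range_succ, mul_right_comm, ih, mul_comm,
      eulerSeries_mul hu0 hu1 (by positivity) hum, pow_succ']
    ring_nf

lemma one_le_eulerSeries (hu0 : 0 < u) (hu1 : u < 1) (hy0 : 0 < y) (hy1 : y < 1) :
    1 ≤ eulerSeries u y := by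
  rw [eulerSeries, (summable_eulerSeries hu0.le hu1 hy0 hy1).tsum_eq_zero_add]
  simp only [pow_zero, PiProd, Finset.range_zero, Finset.prod_empty, div_one]
  refine le_add_of_nonneg_right (tsum_nonneg fun j => ?_)
  have := PiProd_pos hu0.le hu1 (j + 1)
  rw [PiProd] at this
  positivity

lemma eulerSeries_sub_one_le (hu0 : 0 < u) (hu1 : u < 1) (hy0 : 0 < y) (hy1 : y < 1) {c : ℝ}
    (hc0 : 0 < c) (hc1 : c ≤ 1) :
    eulerSeries u (c * y) - 1 ≤ c * (eulerSeries u y - 1) := by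
  have hcy : c * y < 1 := mul_lt_one_of_nonneg_of_lt_one_right hc1 hy0.le hy1
  have hs := summable_eulerSeries hu0.le hu1 hy0 hy1
  have hs' := summable_eulerSeries hu0.le hu1 (mul_pos hc0 hy0) hcy
  rw [eulerSeries, eulerSeries, hs.tsum_eq_zero_add, hs'.tsum_eq_zero_add]
  have h1 : PiProd 0 u = 1 := by simp [PiProd]
  simp only [pow_zero, h1, div_one, add_sub_cancel_left]
  rw [← tsum_mul_left]
  refine ((summable_nat_add_iff 1).2 hs').tsum_le_tsum (fun j => ?_)
    (((summable_nat_add_iff 1).2 hs).mul_left c)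
  have := PiProd_pos hu0.le hu1 (j + 1)
  rw [← mul_div_assoc, mul_pow]
  gcongr
  exact pow_le_of_le_one hc0.le hc1 j.succ_ne_zero

/-- Euler's product formula. -/
lemma tendsto_prod_eulerSeries (hu0 : 0 < u) (hu1 : u < 1) (hy0 : 0 < y) (hy1 : y < 1) :
    Tendsto (fun m => ∏ i ∈ Finset.range m, (1 - u ^ i * y)) atTop (𝓝 (eulerSeries u y)⁻¹) := by
  have hpos := zero_lt_one.trans_le (one_le_eulerSeries hu0 hu1 hy0 hy1)
  have hlim : Tendsto (fun m : ℕ => eulerSeries u (u ^ m * y)) atTop (𝓝 1) := by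
    have hup : Tendsto (fun m : ℕ => 1 + u ^ m * (eulerSeries u y - 1)) atTop (𝓝 1) := by
      simpa using ((tendsto_pow_atTop_nhds_zero_of_lt_one hu0.le hu1).mul_const
        (eulerSeries u y - 1)).const_add 1
    refine tendsto_of_tendsto_of_tendsto_of_le_of_le tendsto_const_nhds hup (fun m => ?_)
      fun m => ?_
    · exact one_le_eulerSeries hu0 hu1 (by positivity) (mul_lt_one_of_nonneg_of_lt_one_right
        (pow_le_one₀ hu0.le hu1.le) hy0.le hy1)
    · have := eulerSeries_sub_one_le hu0 hu1 hy0 hy1 (pow_pos hu0 m) (pow_le_one₀ hu0.le hu1.le)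
      simp only
      linarith
  have := hlim.mul_const (eulerSeries u y)⁻¹
  rw [one_mul] at this
  refine this.congr fun m => ?_
  rw [← prod_mul_eulerSeries hu0 hu1 hy0 hy1, mul_assoc, mul_inv_cancel₀ hpos.ne', mul_one]

lemma tendsto_PiProd (h0 : 0 ≤ y) (h1 : y < 1) :
    Tendsto (fun n => PiProd n y) atTop (𝓝 (PiProdInf y)) := by
  have hm : Multipliable fun j : ℕ => 1 - y ^ (j + 1) := by
    simp only [sub_eq_add_neg]
    refine multipliable_one_add_of_summable ?_
    simp only [norm_neg, norm_pow, Real.norm_of_nonneg h0]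
    exact (summable_nat_add_iff 1).2 (summable_geometric_of_lt_one h0 h1)
  exact hm.hasProd.tendsto_prod_nat

lemma PiProdInf_ne_zero (h0 : 0 < y) (h1 : y < 1) : PiProdInf y ≠ 0 := by
  have h := tendsto_prod_eulerSeries h0 h1 h0 h1
  have h' := tendsto_PiProd h0.le h1
  simp only [PiProd, pow_succ] at h'
  rw [tendsto_nhds_unique h' h]
  exact inv_ne_zero (zero_lt_one.trans_le (one_le_eulerSeries h0 h1 h0 h1)).ne'

variable {q : ℝ}

lemma PiProd_two_mul (q : ℝ) (m : ℕ) : PiProd (2 * m) q =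
    (∏ i ∈ Finset.range m, (1 - q ^ (2 * i + 1))) * PiProd m (q ^ 2) := by
  induction m with
  | zero => simp [PiProd]
  | succ m ih =>
    rw [mul_add_one, PiProd_succ, PiProd_succ, PiProd_succ, ih, Finset.prod_range_succ]
    ring

lemma tendsto_prod_odd (h0 : 0 < q) (h1 : q < 1) :
    Tendsto (fun m => ∏ i ∈ Finset.range m, (1 - q ^ (2 * i + 1))) atTop
      (𝓝 (eulerSeries (q ^ 2) q)⁻¹) := by
  have := tendsto_prod_eulerSeries (pow_pos h0 2) (pow_lt_one₀ h0.le h1 two_ne_zero) h0 h1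
  simpa only [← pow_mul, ← pow_succ] using this

lemma PiProdInf_div (h0 : 0 < q) (h1 : q < 1) :
    PiProdInf q / PiProdInf (q ^ 2) = (eulerSeries (q ^ 2) q)⁻¹ := by
  have hq2 : q ^ 2 < 1 := pow_lt_one₀ h0.le h1 two_ne_zero
  rw [div_eq_iff (PiProdInf_ne_zero (by positivity) hq2)]
  refine tendsto_nhds_unique ((tendsto_PiProd h0.le h1).comp
    (tendsto_id.const_mul_atTop' two_pos)) ?_
  refine ((tendsto_prod_odd h0 h1).mul (tendsto_PiProd (by positivity) hq2)).congr fun m => ?_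
  exact (PiProd_two_mul q m).symm

lemma tendsto_qBinomCoeff (h0 : 0 < q) (h1 : q < 1) (j : ℕ) :
    Tendsto (fun m => qBinomCoeff q m j) atTop (𝓝 (q ^ (3 * j) / PiProd j (q ^ 2))) := by
  have h (i : ℕ) : Tendsto (fun m => 1 - q ^ (2 * (m + i))) atTop (𝓝 1) := by
    have : Tendsto (fun m => 2 * (m + i)) atTop atTop :=
      (tendsto_add_atTop_nat i).const_mul_atTop' two_pos
    simpa using ((tendsto_pow_atTop_nhds_zero_of_lt_one h0.le h1).comp this).const_sub 1
  have := ((tendsto_finsetProd (Finset.range j) fun i _ => h i).const_mul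
    (q ^ (3 * j))).div_const (PiProd j (q ^ 2))
  simpa [qBinomCoeff] using this

lemma tendsto_of_even_odd {X : Type*} [TopologicalSpace X] {f : ℕ → X} {x : X}
    (he : Tendsto (fun m => f (2 * m)) atTop (𝓝 x))
    (ho : Tendsto (fun m => f (2 * m + 1)) atTop (𝓝 x)) : Tendsto f atTop (𝓝 x) := by
  intro S hS
  obtain ⟨a, ha⟩ := mem_atTop_sets.1 (he hS)
  obtain ⟨b, hb⟩ := mem_atTop_sets.1 (ho hS)
  refine mem_atTop_sets.2 ⟨2 * max a b, fun n hn => ?_⟩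
  rcases n.even_or_odd' with ⟨m, rfl | rfl⟩
  · exact ha m (by omega)
  · exact hb m (by omega)

lemma DetRecurrence.tendsto {N : ℕ} {P : ℕ → ℕ → ℝ} (hP : DetRecurrence q N P) (h0 : 0 < q)
    (h1 : q < 1) {K : ℕ} (hK : K ≠ 0) (hN : N ≤ 2 * K) :
    Tendsto (fun n => P n N) atTop (𝓝 ((eulerSeries (q ^ 2) q)⁻¹ *
      ∑ j ∈ Finset.range K, q ^ (3 * j) / PiProd j (q ^ 2) *
        ((1 - q ^ (N - 2 * j)) / (1 - q)))) := by
  have hodd (k : ℕ) (hk : k ≤ N) : Tendsto (fun m => P (2 * m + 1) k) atTop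
      (𝓝 ((eulerSeries (q ^ 2) q)⁻¹ * ∑ j ∈ Finset.range K, q ^ (3 * j) / PiProd j (q ^ 2) *
        ((1 - q ^ (k - 2 * j)) / (1 - q)))) := by
    simp only [hP.eq_oddDetProportion h0.le h1 hK hN _ k hk, oddDetProportion]
    exact ((tendsto_add_atTop_iff_nat 1).2 (tendsto_prod_odd h0 h1)).mul
      (tendsto_finsetSum _ fun j _ => (tendsto_qBinomCoeff h0 h1 j).mul_const _)
  refine tendsto_of_even_odd ?_ (hodd N le_rfl)
  have hpow : Tendsto (fun m => q ^ (2 * m + 1)) atTop (𝓝 0) :=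
    (tendsto_pow_atTop_nhds_zero_of_lt_one h0.le h1).comp
      (tendsto_atTop_mono (fun m => show m ≤ 2 * m + 1 by omega) tendsto_id)
  have h := ((hodd N le_rfl).sub (hpow.mul (hodd (N - 1) (Nat.sub_le _ _)))).div
    (hpow.const_sub 1) (by simp)
  rw [zero_mul, sub_zero, sub_zero, div_one] at h
  refine h.congr fun m => ?_
  have hm := (one_sub_pow_pos h0.le h1 (2 * m)).ne'
  rw [Pi.div_apply, div_eq_iff hm, (hP.odd_even m).1 N le_rfl]
  ring

lemma eulerSeries_sq_cube (h0 : 0 < q) (h1 : q < 1) :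
    eulerSeries (q ^ 2) (q ^ 3) = (1 - q) * eulerSeries (q ^ 2) q := by
  rw [eulerSeries_mul (by positivity) (pow_lt_one₀ h0.le h1 two_ne_zero) h0 h1]
  ring_nf

lemma hasSum_limitTerm (h0 : 0 < q) (h1 : q < 1) (μ : ℕ) :
    HasSum (fun j : ℕ => (q ^ (μ + j) - q ^ (3 * j)) / PiProd j (q ^ 2))
      ((q ^ μ - (1 - q)) * eulerSeries (q ^ 2) q) := by
  have hq2 : q ^ 2 < 1 := pow_lt_one₀ h0.le h1 two_ne_zero
  have hs1 := (summable_eulerSeries (sq_nonneg q) hq2 h0 h1).hasSum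
  have hs3 := (summable_eulerSeries (sq_nonneg q) hq2 (pow_pos h0 3)
    (pow_lt_one₀ h0.le h1 three_ne_zero)).hasSum
  have h := (hs1.mul_left (q ^ μ)).sub hs3
  rw [show (∑' j : ℕ, (q ^ 3) ^ j / PiProd j (q ^ 2)) = eulerSeries (q ^ 2) (q ^ 3) from rfl,
    eulerSeries_sq_cube h0 h1, ← eulerSeries, ← sub_mul] at h
  refine h.congr_fun ?_
  intro j
  rw [pow_add, pow_mul]
  ring

lemma limit_eq (h0 : 0 < q) (h1 : q < 1) {μ s : ℕ} (hμ : 1 ≤ μ) (hs : s = (μ - 1) / 2) :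
    (q ^ μ - (PiProdInf q / PiProdInf (q ^ 2)) *
      ∑' j : ℕ, (q ^ (μ + (s + 1 + j)) - q ^ (3 * (s + 1 + j))) /
        PiProd (s + 1 + j) (q ^ 2)) / (1 - q) =
    1 - (eulerSeries (q ^ 2) q)⁻¹ * ∑ j ∈ Finset.range (s + 1),
      q ^ (3 * j) / PiProd j (q ^ 2) * ((1 - q ^ (μ - 2 * j)) / (1 - q)) := by
  have hq2 : q ^ 2 < 1 := pow_lt_one₀ h0.le h1 two_ne_zero
  have hq : 1 - q ≠ 0 := (sub_pos.2 h1).ne'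
  have he := (zero_lt_one.trans_le (one_le_eulerSeries (pow_pos h0 2) hq2 h0 h1)).ne'
  have hsum := hasSum_limitTerm h0 h1 μ
  have htail := hsum.summable.sum_add_tsum_nat_add (s + 1)
  rw [hsum.tsum_eq] at htail
  simp only [add_comm _ (s + 1)] at htail
  have hfin : ∑ j ∈ Finset.range (s + 1),
      q ^ (3 * j) / PiProd j (q ^ 2) * ((1 - q ^ (μ - 2 * j)) / (1 - q)) =
      -(∑ j ∈ Finset.range (s + 1), (q ^ (μ + j) - q ^ (3 * j)) / PiProd j (q ^ 2)) / (1 - q) := by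
    rw [← Finset.sum_neg_distrib, Finset.sum_div]
    refine Finset.sum_congr rfl fun j hj => ?_
    have hj' : μ + j = 3 * j + (μ - 2 * j) := by
      have := Finset.mem_range.1 hj
      omega
    rw [hj', pow_add]
    ring
  rw [PiProdInf_div h0 h1, hfin, eq_sub_of_add_eq' htail]
  field_simp
  ring

lemma limit_bounds (h0 : 0 < q) (h1 : q < 1) {μ s : ℕ} (hs : s = (μ - 1) / 2) :
    q ^ μ ≤ (q ^ μ - (PiProdInf q / PiProdInf (q ^ 2)) *
      ∑' j : ℕ, (q ^ (μ + (s + 1 + j)) - q ^ (3 * (s + 1 + j))) /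
        PiProd (s + 1 + j) (q ^ 2)) / (1 - q) ∧
    (q ^ μ - (PiProdInf q / PiProdInf (q ^ 2)) *
      ∑' j : ℕ, (q ^ (μ + (s + 1 + j)) - q ^ (3 * (s + 1 + j))) /
        PiProd (s + 1 + j) (q ^ 2)) / (1 - q) ≤ q ^ μ / (1 - q) := by
  have hq2 : q ^ 2 < 1 := pow_lt_one₀ h0.le h1 two_ne_zero
  have hq : 0 < 1 - q := sub_pos.2 h1
  have he := zero_lt_one.trans_le (one_le_eulerSeries (pow_pos h0 2) hq2 h0 h1)
  have hPi (j : ℕ) := PiProd_pos (sq_nonneg q) hq2 j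
  have hsum := (hasSum_limitTerm h0 h1 μ).summable
  have hsum0 := hasSum_limitTerm h0 h1 0
  have hnonneg0 (j : ℕ) : 0 ≤ (q ^ (0 + j) - q ^ (3 * j)) / PiProd j (q ^ 2) :=
    div_nonneg (sub_nonneg.2 (pow_le_pow_of_le_one h0.le h1.le (by omega))) (hPi j).le
  rw [PiProdInf_div h0 h1]
  set T := ∑' j : ℕ, (q ^ (μ + (s + 1 + j)) - q ^ (3 * (s + 1 + j))) /
    PiProd (s + 1 + j) (q ^ 2) with hT
  have hT0 : 0 ≤ T := tsum_nonneg fun j => div_nonneg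
    (sub_nonneg.2 (pow_le_pow_of_le_one h0.le h1.le (by omega))) (hPi _).le
  have hT1 : T ≤ q ^ μ * (q * eulerSeries (q ^ 2) q) := by
    have h2 := hsum0.summable.sum_add_tsum_nat_add (s + 1)
    rw [hsum0.tsum_eq] at h2
    have h3 := Finset.sum_nonneg fun j (_ : j ∈ Finset.range (s + 1)) => hnonneg0 j
    have h4 : T ≤ q ^ μ * ∑' j : ℕ, (q ^ (0 + (j + (s + 1))) - q ^ (3 * (j + (s + 1)))) /
        PiProd (j + (s + 1)) (q ^ 2) := by
      rw [← tsum_mul_left, hT]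
      simp only [add_comm (s + 1)]
      refine ((summable_nat_add_iff (s + 1)).2 hsum).tsum_le_tsum (fun j => ?_)
        (((summable_nat_add_iff (s + 1)).2 hsum0.summable).mul_left _)
      rw [← mul_div_assoc]
      refine div_le_div_of_nonneg_right ?_ (hPi _).le
      have : q ^ μ * q ^ (3 * (j + (s + 1))) ≤ q ^ (3 * (j + (s + 1))) :=
        mul_le_of_le_one_left (by positivity) (pow_le_one₀ h0.le h1.le)
      rw [pow_add q μ, zero_add]
      linarith
    refine h4.trans (mul_le_mul_of_nonneg_left ?_ (by positivity))
    rw [pow_zero, sub_sub_cancel] at h2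
    linarith
  constructor
  · rw [le_div_iff₀ hq]
    have : (eulerSeries (q ^ 2) q)⁻¹ * T ≤ q ^ μ * q := by
      rw [inv_mul_le_iff₀ he]
      linarith
    linarith
  · gcongr
    have : 0 ≤ (eulerSeries (q ^ 2) q)⁻¹ * T := by positivity
    linarith

end Limits

section Proportion

variable {R : Type*} [Fintype R] [CommRing R]

lemma symmDetSum_one (n : ℕ) :
    symmDetSum n (fun _ : R => 1) = (Fintype.card R : ℝ) ^ (n * (n + 1) / 2) := by
  classical
  induction n with
  | zero =>
    rw [symmDetSum]
    have : Unique {A : Matrix (Fin 0) (Fin 0) R // A.IsSymm} :=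
      ⟨⟨⟨0, isSymm_zero⟩⟩, fun A => Subtype.ext (Subsingleton.elim _ _)⟩
    simp
  | succ n ih =>
    rw [symmDetSum_succ]
    have h : (n + 1) * (n + 1 + 1) / 2 = n * (n + 1) / 2 + n + 1 := by
      rw [show (n + 1) * (n + 1 + 1) = n * (n + 1) + 2 * (n + 1) by ring,
        Nat.add_mul_div_left _ _ two_pos, add_assoc]
    rw [symmDetSum] at ih
    rw [ih, h]
    simp
    ring

lemma symmDetSum_eq_natCard (n : ℕ) {f : R → ℝ} (h0 : f 0 = 0) (h1 : ∀ d, d ≠ 0 → f d = 1) :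
    symmDetSum n f = Nat.card {A : Matrix (Fin n) (Fin n) R // A.IsSymm ∧ A.det ≠ 0} := by
  classical
  rw [← Nat.card_congr (Equiv.subtypeSubtypeEquivSubtypeInter
    (fun A : Matrix (Fin n) (Fin n) R => A.IsSymm) fun A => A.det ≠ 0),
    Nat.card_eq_fintype_card, Fintype.card_subtype, Finset.card_filter, symmDetSum]
  push_cast
  refine Finset.sum_congr rfl fun A _ => ?_
  by_cases h : A.1.det = 0
  · simp [h, h0]
  · simp [h, h1]

variable {p N : ℕ} [NeZero (p ^ N)]

open scoped Classical in
/-- Proportion of symmetric `n × n` matrices over `ZMod (p ^ N)` whose determinant is not divisible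
by `p ^ k`. -/
noncomputable def detProportion (p N : ℕ) [NeZero (p ^ N)] (n k : ℕ) : ℝ :=
  symmDetSum n (fun d : ZMod (p ^ N) => if (p : ZMod (p ^ N)) ^ k ∣ d then 0 else 1) /
    ((p ^ N : ℕ) : ℝ) ^ (n * (n + 1) / 2)

lemma detProportion_self (n : ℕ) : detProportion p N n N = Psym n (p ^ N) := by
  have h0 : (p : ZMod (p ^ N)) ^ N = 0 := by
    rw [← Nat.cast_pow, ZMod.natCast_self]
  rw [detProportion, Psym, Nsym, symmDetSum_eq_natCard]
  · simp [h0]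
  · intro d hd
    simp [h0, hd]

lemma detRecurrence_detProportion (hp : p.Prime) (hN : N ≠ 0) :
    DetRecurrence (1 / p) N (detProportion p N) := by
  classical
  have hloc := ZMod.isLocalRing_prime_pow hp hN
  constructor
  · intro n
    simp [detProportion, symmDetSum]
  · intro k hk0 hk
    have h : ¬ (p : ZMod (p ^ N)) ^ k ∣ 1 := fun h =>
      (ZMod.prime_isUnit_iff_not_dvd hp hN _).1 (isUnit_of_dvd_one h) (dvd_pow_self _ hk0)
    have hone := symmDetSum_one (R := ZMod (p ^ N)) 0
    simp only [symmDetSum, detProportion, det_isEmpty, h, if_false] at hone ⊢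
    simpa using hone
  · intro n k hk
    set F : ℕ → ZMod (p ^ N) → ℝ := fun k d => if (p : ZMod (p ^ N)) ^ k ∣ d then 0 else 1 with hF
    have hFu (u d : ZMod (p ^ N)) (hu : IsUnit u) : F k (u * d) = F k d := by
      simp [hF, hu.dvd_mul_left]
    have hFp (k : ℕ) (hk : k ≤ N) (d) : F k (p * d) = F (k - 1) d := by
      simp only [hF, ZMod.pow_dvd_prime_mul_iff hp hk]
    have h := symmDetSum_recurrence (π := (p : ZMod (p ^ N))) hp.pos
      (fun y => by convert ZMod.card_mul_prime_eq hp hN y) hFu rfl rfl n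
    simp only [hFp k hk, hFp (k - 1) ((Nat.sub_le _ _).trans hk), Nat.sub_sub, ZMod.card] at h
    have hr : ((p ^ N : ℕ) : ℝ) ≠ 0 := Nat.cast_ne_zero.2 (NeZero.ne _)
    have hexp (n : ℕ) : (n + 1) * (n + 1 + 1) / 2 = n * (n + 1) / 2 + (n + 1) := by
      rw [show (n + 1) * (n + 1 + 1) = n * (n + 1) + 2 * (n + 1) by ring,
        Nat.add_mul_div_left _ _ two_pos]
    set r := ((p ^ N : ℕ) : ℝ)
    set q : ℝ := 1 / p
    change symmDetSum _ (F k) / r ^ _ = (1 - q) * (symmDetSum _ (F k) / r ^ _) +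
      q * (1 - q ^ n) * (symmDetSum _ (F k) / r ^ _) + q ^ (n + 1) *
      ((1 - q) * (symmDetSum _ (F (k - 1)) / r ^ _) + q * (symmDetSum _ (F (k - 2)) / r ^ _))
    rcases n with _ | n
    · rw [h]
      simp
      field_simp
    · have e1 : r ^ ((n + 1 + 1) * (n + 1 + 1 + 1) / 2) =
          r ^ (n * (n + 1) / 2) * r ^ (n + 1) * r ^ (n + 2) := by
        rw [hexp, hexp, pow_add, pow_add]
      have e2 : r ^ ((n + 1) * (n + 1 + 1) / 2) = r ^ (n * (n + 1) / 2) * r ^ (n + 1) := by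
        rw [hexp, pow_add]
      rw [div_eq_iff (pow_ne_zero _ hr), h, Nat.add_sub_cancel, e1, e2]
      field_simp
      ring

end Proportion

theorem Qsym_tendsto (p : ℕ) (hp : p.Prime) (q : ℝ) (hq : q = 1 / p)
    (μ : ℕ) (hμ : 1 ≤ μ) (s : ℕ) (hs : s = (μ - 1) / 2) (L : ℝ)
    (hL : L = (q ^ μ - (PiProdInf q / PiProdInf (q ^ 2)) *
      ∑' j : ℕ, (q ^ (μ + (s + 1 + j)) - q ^ (3 * (s + 1 + j))) /
        PiProd (s + 1 + j) (q ^ 2)) / (1 - q)) :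
    Filter.Tendsto (fun n : ℕ => Qsym n (p ^ μ)) Filter.atTop (nhds L) ∧
      q ^ μ ≤ L ∧ L ≤ q ^ μ / (1 - q) := by
  have hp1 : (1 : ℝ) < p := by exact_mod_cast hp.one_lt
  have h0 : 0 < q := by rw [hq]; positivity
  have h1 : q < 1 := by rw [hq, div_lt_one (by positivity)]; exact hp1
  have : NeZero (p ^ μ) := ⟨pow_ne_zero _ hp.ne_zero⟩
  refine ⟨?_, hL ▸ limit_bounds h0 h1 hs⟩
  rw [hL, limit_eq h0 h1 hμ hs]
  simp only [Qsym, ← detProportion_self]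
  have hrec : DetRecurrence q μ (detProportion p μ) :=
    hq ▸ detRecurrence_detProportion hp (by omega)
  exact (hrec.tendsto h0 h1 s.succ_ne_zero (by omega)).const_sub 1
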